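/- arXiv:1808.06221 — 7 statements merged into one kernel-verified Lean document; each statement's English description precedes it below -/
import Mathlib

section
/- For every positive integer m there is no real constant C > 0 such that for all (z₁,z₂) ∈ ℂ² \ {(0,0)} one has Σ_{j,k ≥ 0, j+k ≥ m} |z₁|^{2j}|z₂|^{2k} / N_m(j,k) = C · exp(m·Φ(z₁,z₂)). (This expresses that the multiple m·g_EH of the Eguchi–Hanson metric is not balanced in the sense of Donaldson: the Rawnsley ε-function of m·g_EH, which equals e^{−mΦ} times the left-hand sum, is never a positive constant.) -/
open MeasureTheory

/-- The weight `w_m(z) = exp(-m√(u²+1)) · ((1+√(u²+1))/u)^m` with `u = |z₁|² + |z₂|²`. -/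
noncomputable def wEH (m : ℕ) (z : ℂ × ℂ) : ℝ :=
  Real.exp (-(m * Real.sqrt ((‖z.1‖ ^ 2 + ‖z.2‖ ^ 2) ^ 2 + 1))) *
    ((1 + Real.sqrt ((‖z.1‖ ^ 2 + ‖z.2‖ ^ 2) ^ 2 + 1)) /
      (‖z.1‖ ^ 2 + ‖z.2‖ ^ 2)) ^ m

/-- `(1/π²)` times the Lebesgue measure on `ℂ² ≅ ℝ⁴`. -/
noncomputable def muEH : Measure (ℂ × ℂ) :=
  (ENNReal.ofReal (1 / Real.pi ^ 2)) • volume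

/-- The weighted norm `N_m(j,k) = ∫ w_m(z) |z₁|^{2j} |z₂|^{2k} dμ(z)`. -/
noncomputable def NEH (m j k : ℕ) : ENNReal :=
  ∫⁻ z : ℂ × ℂ,
    ENNReal.ofReal (wEH m z * ‖z.1‖ ^ (2 * j) * ‖z.2‖ ^ (2 * k)) ∂muEH

/-- The Kähler potential of the Eguchi–Hanson metric on `ℂ² \ {0}`. -/
noncomputable def PhiEH (z : ℂ × ℂ) : ℝ :=
  Real.sqrt ((‖z.1‖ ^ 2 + ‖z.2‖ ^ 2) ^ 2 + 1) +
    Real.log (‖z.1‖ ^ 2 + ‖z.2‖ ^ 2) -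
    Real.log (1 + Real.sqrt ((‖z.1‖ ^ 2 + ‖z.2‖ ^ 2) ^ 2 + 1))


lemma EH_gauss : Integrable (fun z : ℂ => Real.exp (-(1/4) * ‖z‖^2)) := by
  have h := GaussianFourier.integrable_cexp_neg_mul_sq_norm_add (V := ℂ) (b := (1/4 : ℂ))
    (by norm_num) 0 0
  have h2 := h.norm
  refine h2.congr (Filter.Eventually.of_forall fun z => ?_)
  simp only [Complex.norm_exp]
  congr 1
  have : (-(1/4 : ℂ) * (‖z‖:ℂ)^2 + 0 * ((inner ℝ (0:ℂ) z : ℝ) : ℂ)) = ((-(1/4) * ‖z‖^2 : ℝ) : ℂ) := by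
    push_cast; ring
  rw [this, Complex.ofReal_re]

lemma EH_bound (m : ℕ) (hm : 0 < m) (z : ℂ × ℂ) :
    wEH m z * ‖z.1‖ ^ (2 * (m+1)) * ‖z.2‖ ^ (2 * 0) ≤
      8 * (Real.exp (-(1/4) * ‖z.1‖^2) * Real.exp (-(1/4) * ‖z.2‖^2)) := by
  unfold wEH
  rw [← Real.exp_add]
  set a := ‖z.1‖ ^ 2 with ha
  set b := ‖z.2‖ ^ 2 with hb
  have ha0 : 0 ≤ a := by positivity
  have hb0 : 0 ≤ b := by positivity
  rw [pow_mul, ← ha]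
  obtain ⟨u, hu⟩ : ∃ u, u = a + b := ⟨_, rfl⟩
  rw [show -(1/4) * a + -(1/4) * b = -(u/4) by rw [hu]; ring, ← hu]
  set s := √(u^2+1) with hs
  have hu0 : 0 ≤ u := by linarith
  have hau : a ≤ u := by linarith
  have hs0 : 0 ≤ s := Real.sqrt_nonneg _
  have hus : u ≤ s := Real.le_sqrt_of_sq_le (by linarith)
  rcases hu0.eq_or_lt with h0 | h0
  · have : a = 0 := by linarith
    rw [this]; simp; positivity
  have h1 : (1 + s) * Real.exp (-s) ≤ 1 := by
    rw [Real.exp_neg, ← div_eq_mul_inv, div_le_one (Real.exp_pos _)]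
    linarith [Real.add_one_le_exp s]
  have h2 : ((1 + s) * Real.exp (-s))^m ≤ (1 + s) * Real.exp (-s) :=
    pow_le_of_le_one (by positivity) h1 hm.ne'
  have h3 : 1 + s ≤ 2 * Real.exp (s/2) := by linarith [Real.add_one_le_exp (s/2)]
  have h4 : (1 + s) * Real.exp (-s) ≤ 2 * Real.exp (-(u/2)) := by
    calc _ ≤ 2 * Real.exp (s/2) * Real.exp (-s) := by gcongr
      _ = 2 * Real.exp (-(s/2)) := by rw [mul_assoc, ← Real.exp_add]; ring_nf
      _ ≤ _ := by gcongr
  have h5 : u ≤ 4 * Real.exp (u/4) := by linarith [Real.add_one_le_exp (u/4)]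
  calc Real.exp (-(m * s)) * ((1 + s)/u)^m * a^(m+1) * ‖z.2‖ ^ (2 * 0)
      ≤ Real.exp (-(m * s)) * ((1 + s)/u)^m * u^(m+1) * 1 := by simp; gcongr
    _ = ((1 + s) * Real.exp (-s))^m * u := by
        rw [mul_pow, ← Real.exp_nat_mul, div_pow, mul_neg]; field_simp; ring
    _ ≤ (2 * Real.exp (-(u/2))) * (4 * Real.exp (u/4)) := by
        gcongr; exact h2.trans h4
    _ = 8 * (Real.exp (-(u/2)) * Real.exp (u/4)) := by ring
    _ = _ := by rw [← Real.exp_add]; ring_nf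

lemma EH_meas (m : ℕ) : Measurable (fun z : ℂ × ℂ =>
    ENNReal.ofReal (wEH m z * ‖z.1‖ ^ (2 * (m+1)) * ‖z.2‖ ^ (2 * 0))) := by
  unfold wEH
  fun_prop

lemma EH_N_pos (m : ℕ) (hm : 0 < m) : 0 < (NEH m (m+1) 0).toReal := by
  have hc : ENNReal.ofReal (1 / Real.pi ^ 2) ≠ 0 := by
    have := Real.pi_pos
    simp only [ne_eq, ENNReal.ofReal_eq_zero, not_le]; positivity
  apply ENNReal.toReal_pos
  · unfold NEH muEH
    rw [lintegral_smul_measure]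
    simp only [smul_eq_mul]
    refine mul_ne_zero hc ?_
    rw [Ne, lintegral_eq_zero_iff (EH_meas m)]
    intro h
    have hz : ∀ᵐ z : ℂ × ℂ, z ∉ {z : ℂ × ℂ | z.1 ≠ 0} := by
      filter_upwards [h] with z hz hz1
      simp only [Pi.zero_apply, ENNReal.ofReal_eq_zero] at hz
      have h1 : 0 < ‖z.1‖ := norm_pos_iff.mpr hz1
      have : 0 < wEH m z * ‖z.1‖ ^ (2 * (m+1)) * ‖z.2‖ ^ (2 * 0) := by
        unfold wEH
        simp only [mul_zero, pow_zero]
        positivity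
      linarith
    have hv := measure_eq_zero_iff_ae_notMem.mpr hz
    have ho : IsOpen {z : ℂ × ℂ | z.1 ≠ 0} := isOpen_ne_fun (by fun_prop) (by fun_prop)
    exact (ho.measure_pos volume ⟨(1, 0), by simp⟩).ne' hv
  · unfold NEH muEH
    rw [lintegral_smul_measure]
    simp only [smul_eq_mul]
    refine ENNReal.mul_ne_top ENNReal.ofReal_ne_top ?_
    have hi : Integrable (fun z : ℂ × ℂ =>
        8 * (Real.exp (-(1/4) * ‖z.1‖^2) * Real.exp (-(1/4) * ‖z.2‖^2))) :=
      (EH_gauss.mul_prod EH_gauss).const_mul 8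
    refine ((lintegral_mono fun z => ENNReal.ofReal_le_ofReal (EH_bound m hm z)).trans_lt ?_).ne
    exact hi.lintegral_lt_top

/-- the right-hand side divided by `x^m`, along `z = (√x, 0)` -/
noncomputable def hEH (m : ℕ) (C : ℝ) (x : ℝ) : ℝ :=
  C * (Real.exp (√(x^2+1)) / (1 + √(x^2+1)))^m

lemma hEH_deriv (m : ℕ) (C : ℝ) : HasDerivAt (hEH m C) 0 0 := by
  unfold hEH
  have h1 : HasDerivAt (fun x : ℝ => √(x^2+1)) 0 0 := by
    have := (((hasDerivAt_id (0:ℝ)).pow 2).add_const 1).sqrt (by simp)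
    simpa using this
  have h2 := ((h1.exp.div (h1.const_add 1) (by positivity)).pow m).const_mul C
  simpa using h2

/-- For every positive integer `m`, the metric `m·g_EH` is not balanced: there is no constant
`C > 0` with `Σ_{j+k ≥ m} |z₁|^{2j}|z₂|^{2k}/N_m(j,k) = C·exp(m·Φ(z))` on `ℂ² \ {0}`. -/
theorem mEguchiHanson_not_balanced (m : ℕ) (hm : 0 < m) :
    ¬ ∃ C : ℝ, 0 < C ∧ ∀ z : ℂ × ℂ, z ≠ 0 →
      (∑' p : {p : ℕ × ℕ // m ≤ p.1 + p.2},
        ‖z.1‖ ^ (2 * (p : ℕ × ℕ).1) * ‖z.2‖ ^ (2 * (p : ℕ × ℕ).2) /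
          (NEH m (p : ℕ × ℕ).1 (p : ℕ × ℕ).2).toReal)
        = C * Real.exp (m * PhiEH z) := by
  rintro ⟨C, hC, H⟩
  set b : ℝ := 1 / (NEH m (m+1) 0).toReal with hb
  have hb0 : 0 < b := one_div_pos.mpr (EH_N_pos m hm)
  let T : ℝ → {p : ℕ × ℕ // m ≤ p.1 + p.2} → ℝ := fun x p =>
    x ^ (p : ℕ × ℕ).1 * 0 ^ (2 * (p : ℕ × ℕ).2) / (NEH m (p : ℕ × ℕ).1 (p : ℕ × ℕ).2).toReal
  have hT : ∀ x : ℝ, 0 < x → ∑' p, T x p = x^m * hEH m C x := by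
    intro x hx
    have h := H (((√x : ℝ) : ℂ), 0) (by
      intro h
      have := congrArg Prod.fst h
      simp only [Prod.fst_zero, Complex.ofReal_eq_zero] at this
      exact (Real.sqrt_pos.mpr hx).ne' this)
    have hn : ‖((√x : ℝ) : ℂ)‖^2 = x := by
      rw [Complex.norm_real, Real.norm_of_nonneg (Real.sqrt_nonneg _), Real.sq_sqrt hx.le]
    have hs : 0 < 1 + √(x^2+1) := by positivity
    simp only [pow_mul _ 2, PhiEH, hn, norm_zero] at h
    simp only [T, pow_mul (0:ℝ) 2]
    rw [h]
    simp only [hEH]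
    rw [Real.exp_nat_mul]
    have e : Real.exp (√((x + 0 ^ 2) ^ 2 + 1) + Real.log (x + 0 ^ 2) -
        Real.log (1 + √((x + 0 ^ 2) ^ 2 + 1))) =
        x * (Real.exp (√(x^2+1)) / (1 + √(x^2+1))) := by
      rw [show x + (0:ℝ)^2 = x by ring, Real.exp_sub, Real.exp_add, Real.exp_log hx,
        Real.exp_log hs]
      ring
    rw [e, mul_pow]
    ring
  have hS : ∀ x : ℝ, 0 < x → Summable (fun p => T x p / x^m) := by
    intro x hx
    apply Summable.div_const
    by_contra hns
    have h := hT x hx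
    rw [tsum_eq_zero_of_not_summable hns] at h
    have : 0 < x^m * hEH m C x := by unfold hEH; positivity
    linarith
  have hV : ∀ x : ℝ, 0 < x → ∑' p, T x p / x^m = hEH m C x := by
    intro x hx
    rw [tsum_div_const, hT x hx]
    field_simp
  have hM : ∀ x y : ℝ, 0 < y → y ≤ x → b * (x - y) ≤ hEH m C x - hEH m C y := by
    intro x y hy hxy
    have hx : 0 < x := hy.trans_le hxy
    rw [← hV x hx, ← hV y hy, ← (hS x hx).tsum_sub (hS y hy)]
    have key := ((hS x hx).sub (hS y hy)).le_tsum ⟨(m+1, 0), by simp⟩ (by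
      rintro ⟨⟨j, k⟩, hp⟩ -
      simp only [T, sub_nonneg]
      rcases Nat.eq_zero_or_pos k with rfl | hk
      · obtain ⟨i, hi⟩ := Nat.exists_eq_add_of_le (show m ≤ j by simpa using hp)
        have e : ∀ t : ℝ, 0 < t → t ^ j * 0 ^ (2 * 0) / (NEH m j 0).toReal / t^m
            = t^i / (NEH m j 0).toReal := by
          intro t ht
          rw [hi, pow_add, mul_zero, pow_zero, mul_one, div_right_comm, mul_div_cancel_left₀ _ (by positivity)]
        rw [e x hx, e y hy]
        gcongr
      · simp [hk.ne'])
    refine le_trans (le_of_eq ?_) key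
    simp only [T, mul_zero, pow_zero, mul_one, hb, pow_succ]
    field_simp
  have hd := hEH_deriv m C
  have hM0 : ∀ x : ℝ, 0 < x → b * (x - 0) ≤ hEH m C x - hEH m C 0 := by
    intro x hx
    have hc : Filter.Tendsto (hEH m C) (nhdsWithin 0 (Set.Ioi 0)) (nhds (hEH m C 0)) :=
      hd.continuousAt.tendsto.mono_left nhdsWithin_le_nhds
    have hi : Filter.Tendsto (fun y : ℝ => y) (nhdsWithin 0 (Set.Ioi 0)) (nhds 0) :=
      tendsto_nhdsWithin_of_tendsto_nhds Filter.tendsto_id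
    refine le_of_tendsto_of_tendsto ((hi.const_sub x).const_mul b) (hc.const_sub _) ?_
    filter_upwards [Ioo_mem_nhdsGT hx] with y hy
    exact hM x y hy.1 hy.2.le
  have hsl := (hasDerivAt_iff_tendsto_slope.mp hd).mono_left
    (nhdsWithin_mono (0:ℝ) (fun x (hx : x ∈ Set.Ioi (0:ℝ)) => (ne_of_gt hx : x ≠ 0)))
  have : b ≤ 0 := by
    refine ge_of_tendsto hsl ?_
    filter_upwards [self_mem_nhdsWithin] with x hx
    have hx : 0 < x := hx
    rw [slope_def_field, le_div_iff₀ (by simpa using hx)]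
    exact hM0 x hx
  linarith
end

section
/- For every positive integer m and all nonnegative integers j,k with j+k ≥ m, the weighted norm factorizes as N_m(j,k) = (2·j!·k! / (j+k+1)!) · ∫₀^∞ e^{−m√(r⁴+1)} (1+√(r⁴+1))^m r^{2(j+k−m)+3} dr. -/
open MeasureTheory

theorem EH_sq_subst (f : ℝ → ENNReal) :
    ∫⁻ s in Set.Ioi (0 : ℝ), f s
      = ∫⁻ r in Set.Ioi (0 : ℝ), ENNReal.ofReal (2 * r) * f (r ^ 2) := by
  have him : (fun r : ℝ => r ^ 2) '' Set.Ioi 0 = Set.Ioi 0 := by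
    ext x
    constructor
    · rintro ⟨r, hr, rfl⟩
      have : (0 : ℝ) < r := hr
      exact pow_pos this 2
    · intro hx
      exact ⟨Real.sqrt x, Real.sqrt_pos.2 hx, Real.sq_sqrt (le_of_lt hx)⟩
  have h := lintegral_image_eq_lintegral_deriv_mul_of_monotoneOn
    (s := Set.Ioi (0 : ℝ)) (f := fun r : ℝ => r ^ 2) (f' := fun r => 2 * r) measurableSet_Ioi
    (fun x _ => by simpa using (hasDerivAt_pow 2 x).hasDerivWithinAt)
    (fun a ha b _ hab => pow_le_pow_left₀ (le_of_lt ha) hab 2) f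
  rw [him] at h
  exact h

theorem EH_radial (f : ℝ → ENNReal) (hf : Measurable f) :
    ∫⁻ z : ℂ, f (‖z‖ ^ 2) = ENNReal.ofReal Real.pi * ∫⁻ s in Set.Ioi (0 : ℝ), f s := by
  rw [← Complex.lintegral_comp_polarCoord_symm, EH_sq_subst, polarCoord_target]
  simp only [Complex.norm_polarCoord_symm, sq_abs, smul_eq_mul]
  rw [Measure.volume_eq_prod, ← Measure.prod_restrict, lintegral_prod _ (by fun_prop),
    ← lintegral_const_mul _ (by fun_prop)]
  refine lintegral_congr fun r => ?_
  simp only [lintegral_const, Measure.restrict_apply MeasurableSet.univ, Set.univ_inter,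
    Real.volume_Ioo]
  rw [show Real.pi - -Real.pi = 2 * Real.pi by ring, ENNReal.ofReal_mul (by norm_num),
    ENNReal.ofReal_mul (by norm_num)]
  ring

theorem EH_radial2 (g : ℝ → ℝ → ENNReal) (hg : Measurable (Function.uncurry g)) :
    ∫⁻ z : ℂ × ℂ, g (‖z.1‖ ^ 2) (‖z.2‖ ^ 2)
      = ENNReal.ofReal Real.pi * (ENNReal.ofReal Real.pi *
        ∫⁻ s in Set.Ioi (0 : ℝ), ∫⁻ t in Set.Ioi (0 : ℝ), g s t) := by
  have hm : Measurable fun z : ℂ × ℂ => g (‖z.1‖ ^ 2) (‖z.2‖ ^ 2) :=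
    hg.comp (f := fun z : ℂ × ℂ => (‖z.1‖ ^ 2, ‖z.2‖ ^ 2)) (by fun_prop)
  rw [Measure.volume_eq_prod, lintegral_prod _ hm.aemeasurable]
  have h1 : ∀ x : ℂ, ∫⁻ y : ℂ, g (‖x‖ ^ 2) (‖y‖ ^ 2)
      = ENNReal.ofReal Real.pi * ∫⁻ t in Set.Ioi (0 : ℝ), g (‖x‖ ^ 2) t := fun x =>
    EH_radial _ (hg.comp (f := fun t : ℝ => (‖x‖ ^ 2, t)) (by fun_prop))
  have h2 : Measurable fun s : ℝ => ∫⁻ t in Set.Ioi (0 : ℝ), g s t :=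
    Measurable.lintegral_prod_right hg
  simp only [h1]
  rw [EH_radial (fun s => ENNReal.ofReal Real.pi * ∫⁻ t in Set.Ioi (0 : ℝ), g s t)
    (h2.const_mul _), lintegral_const_mul _ h2]

theorem EH_beta (u : ℝ) (k : ℕ) : ∀ j : ℕ, ∫ s in (0 : ℝ)..u, s ^ j * (u - s) ^ k
    = (Nat.factorial j) * (Nat.factorial k) / (Nat.factorial (j + k + 1)) * u ^ (j + k + 1) := by
  induction k with
  | zero =>
    intro j
    have := Nat.factorial_pos j
    simp [Nat.factorial_succ]
    field_simp
  | succ k ih =>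
    intro j
    have hd : ∀ s ∈ Set.uIcc 0 u, HasDerivAt (fun s : ℝ => s ^ (j + 1) * (u - s) ^ (k + 1))
        ((j + 1) * (s ^ j * (u - s) ^ (k + 1)) - (k + 1) * (s ^ (j + 1) * (u - s) ^ k)) s := by
      intro s _
      have := ((hasDerivAt_id s).pow (j + 1)).mul
        (((hasDerivAt_id s).const_sub u).pow (k + 1))
      refine this.congr_deriv ?_
      simp
      ring
    have h := intervalIntegral.integral_eq_sub_of_hasDerivAt hd
      (Continuous.intervalIntegrable (by fun_prop) _ _)
    rw [intervalIntegral.integral_sub (Continuous.intervalIntegrable (by fun_prop) _ _)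
      (Continuous.intervalIntegrable (by fun_prop) _ _),
      intervalIntegral.integral_const_mul, intervalIntegral.integral_const_mul, ih (j + 1)] at h
    simp only [sub_self, zero_pow (Nat.succ_ne_zero _), mul_zero, zero_mul] at h
    have hj : (j + 1 : ℝ) ≠ 0 := by positivity
    apply mul_left_cancel₀ hj
    rw [sub_eq_zero.1 h, show j + 1 + k + 1 = j + (k + 1) + 1 by ring, Nat.factorial_succ j,
      Nat.factorial_succ k]
    push_cast
    ring

theorem EH_inner (j k : ℕ) (u : ℝ) (hu : 0 < u) :
    ∫⁻ s in Set.Ioo 0 u, ENNReal.ofReal (s ^ j * (u - s) ^ k)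
    = ENNReal.ofReal ((Nat.factorial j) * (Nat.factorial k) / (Nat.factorial (j + k + 1))
        * u ^ (j + k + 1)) := by
  rw [← EH_beta, intervalIntegral.integral_of_le hu.le, integral_Ioc_eq_integral_Ioo,
    ofReal_integral_eq_lintegral_ofReal]
  · exact (Continuous.integrableOn_Icc (by fun_prop)).mono_set Set.Ioo_subset_Icc_self
  · filter_upwards [ae_restrict_mem measurableSet_Ioo] with s hs
    exact mul_nonneg (pow_nonneg hs.1.le _) (pow_nonneg (sub_nonneg.2 hs.2.le) _)

theorem EH_conv (F : ℝ → ENNReal) (hF : Measurable F) (j k : ℕ) :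
    ∫⁻ s in Set.Ioi (0 : ℝ), ∫⁻ t in Set.Ioi (0 : ℝ), F (s + t) * ENNReal.ofReal (s ^ j * t ^ k)
    = ∫⁻ u in Set.Ioi (0 : ℝ), F u * ENNReal.ofReal
      ((Nat.factorial j) * (Nat.factorial k) / (Nat.factorial (j + k + 1)) * u ^ (j + k + 1)) := by
  have h1 : ∀ s : ℝ, ∫⁻ t in Set.Ioi (0 : ℝ), F (s + t) * ENNReal.ofReal (s ^ j * t ^ k)
      = ∫⁻ u : ℝ, (Set.Ioi (0 : ℝ)).indicator 1 (u - s)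
          * (F u * ENNReal.ofReal (s ^ j * (u - s) ^ k)) := by
    intro s
    rw [← lintegral_indicator measurableSet_Ioi, ← lintegral_sub_right_eq_self _ s]
    refine lintegral_congr fun u => ?_
    by_cases h : u - s ∈ Set.Ioi (0 : ℝ)
    · rw [Set.indicator_of_mem h, Set.indicator_of_mem h]
      simp
    · rw [Set.indicator_of_notMem h, Set.indicator_of_notMem h]
      simp
  simp only [h1]
  have hI : Measurable ((Set.Ioi (0 : ℝ)).indicator (1 : ℝ → ENNReal)) :=
    measurable_one.indicator measurableSet_Ioi
  rw [lintegral_lintegral_swap, ← lintegral_indicator measurableSet_Ioi]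
  · refine lintegral_congr fun u => ?_
    rw [← lintegral_indicator measurableSet_Ioi]
    have h2 : ∀ s : ℝ, (Set.Ioi (0 : ℝ)).indicator (fun s =>
        (Set.Ioi (0 : ℝ)).indicator (1 : ℝ → ENNReal) (u - s)
          * (F u * ENNReal.ofReal (s ^ j * (u - s) ^ k))) s
        = F u * (Set.Ioo 0 u).indicator (fun s => ENNReal.ofReal (s ^ j * (u - s) ^ k)) s := by
      intro s
      by_cases a : 0 < s <;> by_cases b : s < u <;> simp [Set.indicator, a, b]
    simp only [h2]
    rw [lintegral_const_mul _ ((by fun_prop : Measurable fun s : ℝ =>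
      ENNReal.ofReal (s ^ j * (u - s) ^ k)).indicator measurableSet_Ioo),
      lintegral_indicator measurableSet_Ioo]
    by_cases hu : 0 < u
    · rw [EH_inner j k u hu, Set.indicator_of_mem (Set.mem_Ioi.2 hu)]
    · rw [Set.indicator_of_notMem (by simpa using hu), Set.Ioo_eq_empty hu]
      simp
  · apply Measurable.aemeasurable
    apply Measurable.mul
    · exact hI.comp (measurable_snd.sub measurable_fst)
    · exact (hF.comp measurable_snd).mul (by fun_prop)

theorem EH_integrable (m n : ℕ) (hm : 0 < m) :
    IntegrableOn (fun r : ℝ => Real.exp (-(m * Real.sqrt (r ^ 4 + 1)))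
      * (1 + Real.sqrt (r ^ 4 + 1)) ^ m * r ^ n) (Set.Ioi 0) := by
  have h := (integrableOn_rpow_mul_exp_neg_mul_sq (b := 1 / 2) (by norm_num) (s := n)
    (by have : (0 : ℝ) ≤ n := Nat.cast_nonneg n
        linarith)).const_mul ((2 : ℝ) ^ m)
  refine Integrable.mono' h (Continuous.aestronglyMeasurable (by fun_prop)) ?_
  filter_upwards [ae_restrict_mem measurableSet_Ioi] with r hr
  have hr : (0 : ℝ) < r := hr
  rw [Real.norm_of_nonneg (by positivity), Real.rpow_natCast]
  set x := Real.sqrt (r ^ 4 + 1) with hx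
  have hx2 : r ^ 2 ≤ x := Real.le_sqrt_of_sq_le (by nlinarith)
  have hx0 : 0 ≤ x := Real.sqrt_nonneg _
  have h1 : 1 + x ≤ 2 * Real.exp (x / 2) := by
    have := Real.add_one_le_exp (x / 2)
    linarith
  have h2 : Real.exp (-(m * x)) * (1 + x) ^ m ≤ 2 ^ m * Real.exp (-(1 / 2) * r ^ 2) := by
    calc Real.exp (-(m * x)) * (1 + x) ^ m
        ≤ Real.exp (-(m * x)) * (2 * Real.exp (x / 2)) ^ m := by gcongr
      _ = 2 ^ m * Real.exp (-(m * (x / 2))) := by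
        rw [mul_pow, ← Real.exp_nat_mul, mul_left_comm, ← Real.exp_add]
        congr 2
        ring
      _ ≤ _ := by
        gcongr
        have : (1 : ℝ) ≤ m := by exact_mod_cast hm
        nlinarith
  calc _ ≤ 2 ^ m * Real.exp (-(1 / 2) * r ^ 2) * r ^ n := by gcongr
    _ = _ := by ring

/-- For `j + k ≥ m` the weighted norm factorizes as
`N_m(j,k) = (2 j! k!/(j+k+1)!) · ∫₀^∞ e^{-m√(r⁴+1)} (1+√(r⁴+1))^m r^{2(j+k-m)+3} dr`. -/
theorem NEH_factorization (m j k : ℕ) (hm : 0 < m) (hjk : m ≤ j + k) :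
    NEH m j k = ENNReal.ofReal
      (2 * (Nat.factorial j) * (Nat.factorial k) / (Nat.factorial (j + k + 1)) *
        ∫ r in Set.Ioi (0 : ℝ),
          Real.exp (-(m * Real.sqrt (r ^ 4 + 1))) * (1 + Real.sqrt (r ^ 4 + 1)) ^ m *
            r ^ (2 * (j + k - m) + 3)) := by
  set W : ℝ → ℝ := fun u => Real.exp (-(m * Real.sqrt (u ^ 2 + 1))) *
    ((1 + Real.sqrt (u ^ 2 + 1)) / u) ^ m with hW
  have hWm : Measurable W := by
    rw [hW]
    fun_prop
  set C : ℝ := (Nat.factorial j) * (Nat.factorial k) / (Nat.factorial (j + k + 1)) with hC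
  have hC0 : 0 ≤ C := by positivity
  have hN : NEH m j k = ∫⁻ u in Set.Ioi (0 : ℝ), ENNReal.ofReal (W u) * ENNReal.ofReal
      (C * u ^ (j + k + 1)) := by
    rw [← EH_conv (fun u => ENNReal.ofReal (W u)) (by fun_prop) j k]
    have h := EH_radial2 (fun s t => ENNReal.ofReal (W (s + t)) * ENNReal.ofReal (s ^ j * t ^ k))
      (by
        simp only [Function.uncurry_def]
        fun_prop)
    have e : ∀ z : ℂ × ℂ, ENNReal.ofReal (wEH m z * ‖z.1‖ ^ (2 * j) * ‖z.2‖ ^ (2 * k))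
        = ENNReal.ofReal (W (‖z.1‖ ^ 2 + ‖z.2‖ ^ 2))
          * ENNReal.ofReal ((‖z.1‖ ^ 2) ^ j * (‖z.2‖ ^ 2) ^ k) := by
      intro z
      rw [← ENNReal.ofReal_mul (by rw [hW]; positivity), mul_assoc, pow_mul, pow_mul]
      rfl
    rw [NEH, muEH, lintegral_smul_measure]
    simp only [e]
    rw [h, smul_eq_mul, ← mul_assoc, ← mul_assoc, ← ENNReal.ofReal_mul (by positivity),
      ← ENNReal.ofReal_mul (by positivity)]
    rw [show 1 / Real.pi ^ 2 * Real.pi * Real.pi = 1 by field_simp]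
    simp
  rw [hN, EH_sq_subst, ← integral_const_mul, ofReal_integral_eq_lintegral_ofReal]
  · refine setLIntegral_congr_fun measurableSet_Ioi fun r hr => ?_
    have hr : (0 : ℝ) < r := hr
    rw [← ENNReal.ofReal_mul (by rw [hW]; positivity), ← ENNReal.ofReal_mul (by positivity)]
    congr 1
    obtain ⟨d, hd⟩ := Nat.exists_eq_add_of_le hjk
    simp only [hW, hC]
    rw [← pow_mul r 2 2, div_pow]
    rw [show j + k - m = d by omega, hd]
    field_simp
    ring
  · exact (EH_integrable m _ hm).const_mul _
  · filter_upwards [ae_restrict_mem measurableSet_Ioi] with r hr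
    have hr : (0 : ℝ) < r := hr
    simp only [Pi.zero_apply]
    positivity
end

section
/- For every positive integer m, 4m(m+3) · (Γ(m+2, 2m) − m·Γ(m+1, 2m)) ≠ (m+1) · (Γ(m+4, 2m) − 3m·Γ(m+3, 2m) + 2m²·Γ(m+2, 2m)). (This is the incomplete-Gamma form of the inequality showing that the two candidate values of the balanced constant C are incompatible.) -/
open MeasureTheory

/-- The upper incomplete Gamma function `Γ(a,x) = ∫_x^∞ t^{a-1} e^{-t} dt`. -/
noncomputable def GammaInc (a x : ℝ) : ℝ :=
  ∫ t in Set.Ioi x, t ^ (a - 1) * Real.exp (-t)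

lemma GI_nat (k : ℕ) (a x : ℝ) (ha : a = k + 1) :
    GammaInc a x = ∫ t in Set.Ioi x, t ^ k * Real.exp (-t) := by
  unfold GammaInc
  have : a - 1 = (k : ℝ) := by rw [ha]; ring
  simp only [this, Real.rpow_natCast]

lemma GI_int (k : ℕ) (x : ℝ) (hx : 0 ≤ x) :
    IntegrableOn (fun t : ℝ => t ^ k * Real.exp (-t)) (Set.Ioi x) := by
  have h := Real.GammaIntegral_convergent (s := (k : ℝ) + 1) (by positivity)
  have h2 := h.mono_set (Set.Ioi_subset_Ioi hx)
  simp only [add_sub_cancel_right, Real.rpow_natCast] at h2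
  simpa only [mul_comm] using h2

lemma GI_rec (k : ℕ) (x : ℝ) (hx : 0 ≤ x) :
    (∫ t in Set.Ioi x, t ^ (k+1) * Real.exp (-t)) =
      (k + 1) * (∫ t in Set.Ioi x, t ^ k * Real.exp (-t)) + x ^ (k+1) * Real.exp (-x) := by
  have hd : ∀ t ∈ Set.Ici x, HasDerivAt (fun t : ℝ => t ^ (k+1) * Real.exp (-t))
      ((k + 1) * (t ^ k * Real.exp (-t)) - t ^ (k+1) * Real.exp (-t)) t := by
    intro t _
    have h1 := (hasDerivAt_pow (k+1) t).mul ((hasDerivAt_neg t).exp)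
    refine h1.congr_deriv ?_
    push_cast
    ring_nf
  have i1 := (GI_int k x hx).const_mul ((k : ℝ) + 1)
  have i2 := GI_int (k+1) x hx
  have h := integral_Ioi_of_hasDerivAt_of_tendsto' hd (i1.sub i2)
    (Real.tendsto_pow_mul_exp_neg_atTop_nhds_zero (k+1))
  rw [integral_sub i1 i2, integral_const_mul] at h
  linarith

lemma GI_bound (k : ℕ) : ∀ y : ℝ, 0 ≤ y → 
    (∫ t in Set.Ioi (y + k), t ^ k * Real.exp (-t)) *
      (y * (y^2 + 6*y + 6 + 2*k) + k * (y + 4)) ≤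
      (y + k) ^ (k+1) * Real.exp (-(y + k)) * (y^2 + 6*y + 6 + 2*k) := by
  induction k with
  | zero =>
    intro y hy
    simp [integral_exp_Iic]
    apply le_of_eq; ring
  | succ k ih =>
    intro y hy
    have h := ih (y + 1) (by linarith)
    have e : y + 1 + (k : ℝ) = y + ((k + 1 : ℕ) : ℝ) := by push_cast; ring
    rw [e] at h
    have hx : 0 ≤ y + ((k + 1 : ℕ) : ℝ) := by positivity
    rw [GI_rec k _ hx]
    set x := y + ((k + 1 : ℕ) : ℝ) with hxd
    set G := ∫ t in Set.Ioi x, t ^ k * Real.exp (-t)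
    have hE : 0 ≤ x ^ (k+1) * Real.exp (-x) := by positivity
    rw [pow_succ x (k+1)]
    set E := x ^ (k+1) * Real.exp (-x)
    have hx2 : x ^ (k+1) * x * Real.exp (-x) = x * E := by simp only [E]; ring
    rw [hx2]
    have hk : (0:ℝ) ≤ k := by positivity
    have hkk : (0:ℝ) ≤ (k + 1) * k * (k - 1) := by
      rcases k with _ | k
      · simp
      · push_cast; ring_nf; positivity
    push_cast at *
    set D0 := (y + 1) * ((y+1)^2 + 6*(y+1) + 6 + 2*(k:ℝ)) + k * (y + 1 + 4) with hD0
    set N0 := (y+1)^2 + 6*(y+1) + 6 + 2*(k:ℝ) with hN0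
    set D1 := y * (y^2 + 6*y + 6 + 2*((k:ℝ)+1)) + (k+1) * (y + 4) with hD1
    set N1 := y^2 + 6*y + 6 + 2*((k:ℝ)+1) with hN1
    have hD0p : 0 < D0 := by positivity
    have hD1p : 0 < D1 := by positivity
    have key : ((k+1) * N0 + D0) * D1 ≤ x * N1 * D0 := by
      rw [← sub_nonneg]
      have : x * N1 * D0 - ((k+1) * N0 + D0) * D1 = 6 * ((k + 1) * k * (k - 1)) := by
        rw [hD0, hN0, hD1, hN1, hxd]; ring
      rw [this]; positivity
    refine le_of_mul_le_mul_right ?_ hD0p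
    have h3 := mul_le_mul_of_nonneg_left h (show 0 ≤ (k+1) * D1 by positivity)
    have h4 := mul_le_mul_of_nonneg_left key hE
    linarith

theorem balanced_obstruction_gamma (m : ℕ) (hm : 0 < m) :
    4 * (m : ℝ) * ((m : ℝ) + 3) *
        (GammaInc (m + 2) (2 * m) - m * GammaInc (m + 1) (2 * m))
      ≠ ((m : ℝ) + 1) *
        (GammaInc (m + 4) (2 * m) - 3 * m * GammaInc (m + 3) (2 * m)
          + 2 * (m : ℝ) ^ 2 * GammaInc (m + 2) (2 * m)) := by
  intro h
  have hmR : (1:ℝ) ≤ m := by exact_mod_cast hm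
  have hx : (0:ℝ) ≤ 2 * m := by positivity
  rw [GI_nat m (m+1) _ rfl, GI_nat (m+1) (m+2) _ (by push_cast; ring),
    GI_nat (m+2) (m+3) _ (by push_cast; ring), GI_nat (m+3) (m+4) _ (by push_cast; ring),
    GI_rec (m+2) _ hx, GI_rec (m+1) _ hx, GI_rec m _ hx] at h
  have hb := GI_bound m m (by positivity)
  have hG : 0 ≤ ∫ t in Set.Ioi (2 * (m:ℝ)), t ^ m * Real.exp (-t) := by
    refine setIntegral_nonneg measurableSet_Ioi ?_
    intro t ht
    have : 0 ≤ t := hx.trans (le_of_lt ht)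
    positivity
  rw [← two_mul] at hb
  have hE : 0 < (2 * (m:ℝ)) ^ (m+1) * Real.exp (-(2 * (m:ℝ))) := by positivity
  rw [pow_succ _ (m+2), pow_succ _ (m+1)] at h
  set G := ∫ t in Set.Ioi (2 * (m:ℝ)), t ^ m * Real.exp (-t)
  set P := (2 * (m:ℝ)) ^ (m+1)
  set X := Real.exp (-(2 * (m:ℝ)))
  push_cast at h
  have h2 : ((m:ℝ)^3 + m - 6) * G = ((m:ℝ)^2 - m + 6) * (P * X) := by linear_combination h
  generalize P * X = E at *
  clear h
  rcases Nat.lt_or_ge m 2 with h1 | h1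
  · have : m = 1 := by omega
    subst this
    norm_num at h2
    linarith
  · have h1R : (2:ℝ) ≤ m := by exact_mod_cast h1
    generalize (m:ℝ) = z at *
    have hc : 0 ≤ z^3 + z - 6 := by nlinarith [sq_nonneg (z-2), mul_self_nonneg z]
    have h3 := mul_le_mul_of_nonneg_left hb hc
    have h4 : (z^2 - z + 6) * E * (z * (z^2 + 6*z + 6 + 2*z) + z * (z + 4)) ≤
      (z^3 + z - 6) * (E * (z^2 + 6*z + 6 + 2*z)) := by
      rw [← h2]; linarith
    have h5 : 0 < E * (42 * z^2 + 102 * z + 36) := by positivity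
    linarith
end

section
/- For every positive integer m one has the strict inequality Γ(m+4, 2m) − 3m·Γ(m+3, 2m) + 2m²·Γ(m+2, 2m) > 0. -/
open MeasureTheory

/-- For every positive integer `m` one has
`Γ(m+4,2m) - 3m Γ(m+3,2m) + 2m² Γ(m+2,2m) > 0`. -/
theorem gamma_comb_pos_deg4 (m : ℕ) (hm : 0 < m) :
    0 < GammaInc (m + 4) (2 * m) - 3 * m * GammaInc (m + 3) (2 * m)
        + 2 * (m : ℝ) ^ 2 * GammaInc (m + 2) (2 * m) := by
  have hm' : (0:ℝ) < m := by exact_mod_cast hm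
  have hI : ∀ a : ℝ, 0 < a → IntegrableOn (fun t : ℝ => t ^ (a - 1) * Real.exp (-t))
      (Set.Ioi (2 * (m:ℝ))) := by
    intro a ha
    have h := (Real.GammaIntegral_convergent ha).mono_set
      (Set.Ioi_subset_Ioi (by positivity : (0:ℝ) ≤ 2 * m))
    simpa only [mul_comm] using h
  have h4 := hI (m + 4) (by positivity)
  have h3 := (hI (m + 3) (by positivity)).const_mul (3 * (m:ℝ))
  have h2 := (hI (m + 2) (by positivity)).const_mul (2 * (m:ℝ) ^ 2)
  unfold GammaInc
  rw [← integral_const_mul, ← integral_const_mul, ← integral_sub h4 h3]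
  have h43 : Integrable (fun t : ℝ => t ^ ((m:ℝ) + 4 - 1) * Real.exp (-t)
      - 3 * m * (t ^ ((m:ℝ) + 3 - 1) * Real.exp (-t)))
      (volume.restrict (Set.Ioi (2 * (m:ℝ)))) := h4.sub h3
  rw [← integral_add h43 h2]
  have key : ∀ t ∈ Set.Ioi (2 * (m:ℝ)),
      0 < t ^ ((m:ℝ) + 4 - 1) * Real.exp (-t) - 3 * m * (t ^ ((m:ℝ) + 3 - 1) * Real.exp (-t))
        + 2 * (m:ℝ) ^ 2 * (t ^ ((m:ℝ) + 2 - 1) * Real.exp (-t)) := by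
    intro t ht
    have ht' : 2 * (m:ℝ) < t := ht
    have h0 : 0 < t := by linarith
    have e4 : t ^ ((m:ℝ) + 4 - 1) = t ^ ((m:ℝ) + 1) * t ^ 2 := by
      rw [← Real.rpow_natCast t 2, ← Real.rpow_add h0]; congr 1; push_cast; ring
    have e3 : t ^ ((m:ℝ) + 3 - 1) = t ^ ((m:ℝ) + 1) * t := by
      rw [← Real.rpow_add_one h0.ne']; congr 1; ring
    have e2 : t ^ ((m:ℝ) + 2 - 1) = t ^ ((m:ℝ) + 1) := by congr 1; ring
    rw [e4, e3, e2]
    have : 0 < t ^ ((m:ℝ) + 1) * Real.exp (-t) * ((t - m) * (t - 2 * m)) :=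
      mul_pos (mul_pos (Real.rpow_pos_of_pos h0 _) (Real.exp_pos _))
        (mul_pos (by linarith) (by linarith))
    linarith [this]
  have hint := h43.add h2
  refine (setIntegral_pos_iff_support_of_nonneg_ae ?_ hint).2 ?_
  · exact (ae_restrict_iff' measurableSet_Ioi).2 (ae_of_all _ fun t ht => (key t ht).le)
  · have hpos : 0 < volume (Set.Ioi (2 * (m:ℝ))) := by simp
    refine lt_of_lt_of_le hpos (measure_mono ?_)
    intro t ht
    exact ⟨(key t ht).ne', ht⟩
end

section
/- For every positive integer m and every (z₁,z₂) ∈ ℂ², the family (|z₁|^{2j}|z₂|^{2k} / N_m(j,k)) indexed by pairs of nonnegative integers (j,k) with j+k ≥ m is summable; i.e., the series defining the Rawnsley ε-function of m·g_EH converges at every point. -/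
open MeasureTheory

lemma wEH_lower (m : ℕ) (R : ℝ) (hR : 0 < R) (z : ℂ × ℂ)
    (h1 : R < ‖z.1‖) (h1' : ‖z.1‖ < R + 1) (h2' : ‖z.2‖ < R + 1) :
    Real.exp (-(m * Real.sqrt (((R+1) ^ 2 + (R+1) ^ 2) ^ 2 + 1))) ≤ wEH m z := by
  unfold wEH
  have hu : 0 < ‖z.1‖ ^ 2 + ‖z.2‖ ^ 2 := by
    have : 0 < ‖z.1‖ := hR.trans h1
    positivity
  have hle : ‖z.1‖ ^ 2 + ‖z.2‖ ^ 2 ≤ (R+1) ^ 2 + (R+1) ^ 2 := by gcongr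
  set u := ‖z.1‖ ^ 2 + ‖z.2‖ ^ 2
  have hs : u ≤ Real.sqrt (u ^ 2 + 1) := Real.le_sqrt_of_sq_le (by linarith)
  have hq : 1 ≤ (1 + Real.sqrt (u ^ 2 + 1)) / u := by
    rw [le_div_iff₀ hu]; linarith
  have hp := one_le_pow₀ hq (n := m)
  refine le_trans ?_ (le_mul_of_one_le_right (Real.exp_pos _).le hp)
  gcongr

lemma NEH_lower (m : ℕ) (R : ℝ) (hR : 0 < R) : ∃ c : ℝ, 0 < c ∧ ∀ j k : ℕ,
    ENNReal.ofReal (c * (R ^ (2 * j) * R ^ (2 * k))) ≤ NEH m j k := by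
  set K := Real.exp (-(m * Real.sqrt (((R+1) ^ 2 + (R+1) ^ 2) ^ 2 + 1))) with hK
  have hK0 : 0 < K := Real.exp_pos _
  let A : Set ℂ := {w | R < ‖w‖ ∧ ‖w‖ < R + 1}
  have hA : IsOpen A := (isOpen_lt continuous_const continuous_norm).inter
    (isOpen_lt continuous_norm continuous_const)
  have hAne : A.Nonempty := by
    refine ⟨((R + 1/2 : ℝ) : ℂ), ?_⟩
    have : ‖((R + 1/2 : ℝ) : ℂ)‖ = R + 1/2 := by
      rw [Complex.norm_real, Real.norm_of_nonneg (by linarith)]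
    constructor <;> rw [this] <;> linarith
  have hAb : Bornology.IsBounded A :=
    (Metric.isBounded_ball (x := (0:ℂ)) (r := R + 1)).subset
      (fun w hw => by simpa using hw.2)
  have hS : IsOpen (A ×ˢ A) := hA.prod hA
  have hpos : 0 < muEH (A ×ˢ A) := by
    unfold muEH
    rw [Measure.smul_apply, smul_eq_mul]
    refine ENNReal.mul_pos ?_ (hS.measure_pos _ (hAne.prod hAne)).ne'
    have : 0 < 1 / Real.pi ^ 2 := by positivity
    simpa using this
  have hfin : muEH (A ×ˢ A) ≠ ⊤ := by
    unfold muEH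
    rw [Measure.smul_apply, smul_eq_mul]
    exact ENNReal.mul_ne_top ENNReal.ofReal_ne_top (hAb.prod hAb).measure_lt_top.ne
  refine ⟨K * (muEH (A ×ˢ A)).toReal, mul_pos hK0 (ENNReal.toReal_pos hpos.ne' hfin), ?_⟩
  intro j k
  have e : K * (muEH (A ×ˢ A)).toReal * (R ^ (2 * j) * R ^ (2 * k))
      = (K * R ^ (2 * j) * R ^ (2 * k)) * (muEH (A ×ˢ A)).toReal := by ring
  rw [e, ENNReal.ofReal_mul (by positivity), ENNReal.ofReal_toReal hfin,
    ← setLIntegral_const]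
  unfold NEH
  refine le_trans (setLIntegral_mono' hS.measurableSet ?_) (setLIntegral_le_lintegral (A ×ˢ A) _)
  rintro z ⟨⟨h1, h1'⟩, ⟨h2, h2'⟩⟩
  apply ENNReal.ofReal_le_ofReal
  have := wEH_lower m R hR z h1 h1' h2'
  rw [← hK] at this
  have hw : 0 ≤ wEH m z := hK0.le.trans this
  gcongr



/-- For every positive integer `m` and every point `z ∈ ℂ²`, the family
`(|z₁|^{2j}|z₂|^{2k}/N_m(j,k))_{j+k ≥ m}` is summable: the series defining the Rawnsley
ε-function of `m·g_EH` converges at every point. -/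
theorem epsilon_series_summable (m : ℕ) (hm : 0 < m) (z : ℂ × ℂ) :
    Summable (fun p : {p : ℕ × ℕ // m ≤ p.1 + p.2} =>
      ‖z.1‖ ^ (2 * (p : ℕ × ℕ).1) * ‖z.2‖ ^ (2 * (p : ℕ × ℕ).2) /
        (NEH m (p : ℕ × ℕ).1 (p : ℕ × ℕ).2).toReal) := by
  set R : ℝ := 2 * (‖z.1‖ + ‖z.2‖) + 1 with hRd
  have n1 := norm_nonneg z.1
  have n2 := norm_nonneg z.2
  have hR : 0 < R := by positivity
  obtain ⟨c, hc, hN⟩ := NEH_lower m R hR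
  have hg : Summable (fun p : ℕ × ℕ => ((1/4 : ℝ) ^ p.1 * (1/4 : ℝ) ^ p.2) * c⁻¹) :=
    ((summable_geometric_of_lt_one (by norm_num) (by norm_num)).mul_of_nonneg
      (summable_geometric_of_lt_one (by norm_num) (by norm_num))
      (fun _ => by positivity) (fun _ => by positivity)).mul_right _
  refine Summable.of_nonneg_of_le (fun p => by positivity) ?_
    (hg.comp_injective Subtype.val_injective)
  rintro ⟨⟨j, k⟩, hp⟩
  simp only [Function.comp]
  by_cases ht : NEH m j k = ⊤
  · rw [ht]; simp; positivity
  have hle : c * (R ^ (2 * j) * R ^ (2 * k)) ≤ (NEH m j k).toReal :=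
    (ENNReal.ofReal_le_iff_le_toReal ht).1 (hN j k)
  have hpos : 0 < c * (R ^ (2 * j) * R ^ (2 * k)) := by positivity
  have key : ∀ (x : ℝ) (n : ℕ), 0 ≤ x → 2 * x ≤ R → x ^ (2 * n) ≤ (1/4) ^ n * R ^ (2 * n) := by
    intro x n hx hxR
    rw [pow_mul, pow_mul, ← mul_pow]
    gcongr
    nlinarith
  rw [div_le_iff₀ (hpos.trans_le hle)]
  calc ‖z.1‖ ^ (2 * j) * ‖z.2‖ ^ (2 * k)
      ≤ ((1/4) ^ j * R ^ (2 * j)) * ((1/4) ^ k * R ^ (2 * k)) := by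
        gcongr
        · exact key _ _ n1 (by linarith)
        · exact key _ _ n2 (by linarith)
    _ = (1/4) ^ j * (1/4) ^ k * c⁻¹ * (c * (R ^ (2 * j) * R ^ (2 * k))) := by
        field_simp
    _ ≤ _ := by gcongr
end

section
/- Let φ : (0,∞) → ℝ be φ(u) = √(u²+1) + log u − log(1+√(u²+1)). Then for every u > 0 one has the Monge–Ampère identity φ'(u) · (φ'(u) + u·φ''(u)) = 1, and moreover φ'(u) + u·φ''(u) = u/√(u²+1) > 0. (For a radial potential Φ(z) = φ(|z₁|²+|z₂|²) on ℂ²\{0}, the determinant of the complex Hessian (∂²Φ/∂z_i∂z̄_j) equals φ'(u)(φ'(u)+uφ''(u)); this identity is the statement that the Eguchi–Hanson metric is Ricci-flat, and the positivity statements express that it is a Kähler metric.) -/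
/-- The radial profile of the Kähler potential of the Eguchi–Hanson metric. -/
noncomputable def phiEH (u : ℝ) : ℝ :=
  Real.sqrt (u ^ 2 + 1) + Real.log u - Real.log (1 + Real.sqrt (u ^ 2 + 1))

theorem phiEH_sqrt_hasDerivAt (u : ℝ) :
    HasDerivAt (fun x : ℝ => Real.sqrt (x ^ 2 + 1)) (u / Real.sqrt (u ^ 2 + 1)) u := by
  have h : HasDerivAt (fun x : ℝ => x ^ 2 + 1) (2 * u) u := by
    simpa using (hasDerivAt_pow 2 u).add_const 1
  convert h.sqrt (by positivity) using 1
  have : Real.sqrt (u ^ 2 + 1) ≠ 0 := by positivity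
  field_simp

theorem phiEH_hasDerivAt (u : ℝ) (hu : 0 < u) :
    HasDerivAt phiEH (Real.sqrt (u ^ 2 + 1) / u) u := by
  have h := phiEH_sqrt_hasDerivAt u
  have hs : 0 < Real.sqrt (u ^ 2 + 1) := by positivity
  have hq : Real.sqrt (u ^ 2 + 1) ^ 2 = u ^ 2 + 1 := Real.sq_sqrt (by positivity)
  have h2 := (h.add (Real.hasDerivAt_log hu.ne')).sub ((h.const_add 1).log (by positivity))
  refine HasDerivAt.congr_deriv (f := phiEH) h2 ?_
  generalize Real.sqrt (u ^ 2 + 1) = s at *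
  have : 1 + s ≠ 0 := by positivity
  field_simp
  linear_combination (-s) * hq

/-- Monge–Ampère identity for the Eguchi–Hanson potential: for every `u > 0`,
`φ'(u)(φ'(u) + u φ''(u)) = 1`, with `φ'(u) + u φ''(u) = u/√(u²+1) > 0`. -/
theorem phiEH_monge_ampere (u : ℝ) (hu : 0 < u) :
    deriv phiEH u * (deriv phiEH u + u * deriv (deriv phiEH) u) = 1 ∧
    deriv phiEH u + u * deriv (deriv phiEH) u = u / Real.sqrt (u ^ 2 + 1) ∧
    0 < u / Real.sqrt (u ^ 2 + 1) := by
  have hs : 0 < Real.sqrt (u ^ 2 + 1) := by positivity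
  have hq : Real.sqrt (u ^ 2 + 1) ^ 2 = u ^ 2 + 1 := Real.sq_sqrt (by positivity)
  have h1 : deriv phiEH u = Real.sqrt (u ^ 2 + 1) / u := (phiEH_hasDerivAt u hu).deriv
  have he : deriv phiEH =ᶠ[nhds u] fun x => Real.sqrt (x ^ 2 + 1) / x := by
    filter_upwards [lt_mem_nhds hu] with x hx
    exact (phiEH_hasDerivAt x hx).deriv
  have h2 := he.deriv_eq.trans
    ((phiEH_sqrt_hasDerivAt u).div (hasDerivAt_id u) hu.ne').deriv
  have h3 : deriv phiEH u + u * deriv (deriv phiEH) u = u / Real.sqrt (u ^ 2 + 1) := by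
    rw [h1, h2]
    simp only [id]
    field_simp
    ring
  refine ⟨?_, h3, by positivity⟩
  rw [h3, h1]
  field_simp
end

section
/- The function f : (0,∞) → ℝ defined by f(x) = x(x+1)/(Γ(x+2,2x) − x·Γ(x+1,2x)) − 4x³(x+3)/((x+2)·(Γ(x+4,2x) − 3x·Γ(x+3,2x) + 2x²·Γ(x+2,2x))) tends to 0 as x → +∞. -/
open MeasureTheory Filter

lemma aux_integrable (a x : ℝ) (hx : 0 < x) (ha : 0 < a) :
    IntegrableOn (fun t : ℝ => t ^ (a - 1) * Real.exp (-t)) (Set.Ioi x) := by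
  have h := (Real.GammaIntegral_convergent ha).mono_set (Set.Ioi_subset_Ioi hx.le)
  refine h.congr_fun (fun t _ => ?_) measurableSet_Ioi
  exact mul_comm _ _

lemma aux_lower (g : ℝ → ℝ) (y c : ℝ) (hg : IntegrableOn g (Set.Ioi y))
    (h0 : ∀ t, y < t → 0 ≤ g t) (h1 : ∀ t, y + 1 < t → c * Real.exp (-t) ≤ g t) :
    c * Real.exp (-(y + 1)) ≤ ∫ t in Set.Ioi y, g t := by
  have hs : Set.Ioi (y + 1) ⊆ Set.Ioi y := Set.Ioi_subset_Ioi (by linarith)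
  calc c * Real.exp (-(y + 1)) = ∫ t in Set.Ioi (y + 1), c * Real.exp (-t) := by
        rw [integral_const_mul, integral_exp_neg_Ioi]
    _ ≤ ∫ t in Set.Ioi (y + 1), g t := by
        refine setIntegral_mono_on ?_ (hg.mono_set hs) measurableSet_Ioi (fun t ht => h1 t ht)
        exact (integrableOn_exp_neg_Ioi (y + 1)).const_mul c
    _ ≤ ∫ t in Set.Ioi y, g t := by
        refine setIntegral_mono_set hg ?_ (LE.le.eventuallyLE hs)
        exact (ae_restrict_iff' measurableSet_Ioi).2 (Eventually.of_forall h0)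

lemma aux_pow (x t : ℝ) (hx : Real.exp 3 ≤ x) (ht : 2 * x < t) :
    Real.exp (3 * x) ≤ t ^ x := by
  have h3 := Real.exp_pos 3
  rw [Real.exp_mul]
  exact Real.rpow_le_rpow h3.le (by linarith) (by linarith)

lemma aux_D1 (x : ℝ) (hx : Real.exp 3 ≤ x) :
    Real.exp (x - 1) ≤ GammaInc (x + 2) (2 * x) - x * GammaInc (x + 1) (2 * x) := by
  have h4 : 1 ≤ x := by linarith [Real.add_one_le_exp (3:ℝ)]
  have i2 := aux_integrable (x + 2) (2 * x) (by linarith) (by linarith)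
  have i1 := aux_integrable (x + 1) (2 * x) (by linarith) (by linarith)
  unfold GammaInc
  rw [← integral_const_mul, ← integral_sub i2 (i1.const_mul x)]
  have e : Real.exp (x - 1) = Real.exp (3 * x) * Real.exp (-(2 * x + 1)) := by
    rw [← Real.exp_add]; congr 1; ring
  have key : ∀ t, 2 * x < t → t ^ (x + 2 - 1) * Real.exp (-t)
      - x * (t ^ (x + 1 - 1) * Real.exp (-t)) = t ^ x * (t - x) * Real.exp (-t) := by
    intro t ht
    have : t ^ (x + 2 - 1) = t ^ x * t := by
      rw [← Real.rpow_add_one (by linarith)]; congr 1; ring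
    rw [this, add_sub_cancel_right]; ring
  rw [e]
  refine aux_lower _ _ _ (i2.sub (i1.const_mul x)) (fun t ht => ?_) (fun t ht => ?_)
  · show 0 ≤ t ^ (x + 2 - 1) * Real.exp (-t) - x * (t ^ (x + 1 - 1) * Real.exp (-t))
    rw [key t ht]
    have := aux_pow x t hx ht
    have := Real.exp_pos (3 * x)
    exact mul_nonneg (mul_nonneg (by linarith) (by linarith)) (Real.exp_pos _).le
  · show _ ≤ t ^ (x + 2 - 1) * Real.exp (-t) - x * (t ^ (x + 1 - 1) * Real.exp (-t))
    rw [key t (by linarith)]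
    have h := aux_pow x t hx (by linarith)
    have := Real.exp_pos (3 * x)
    refine mul_le_mul_of_nonneg_right ?_ (Real.exp_pos _).le
    nlinarith

lemma aux_D2 (x : ℝ) (hx : Real.exp 3 ≤ x) :
    Real.exp (x - 1) ≤ GammaInc (x + 4) (2 * x) - 3 * x * GammaInc (x + 3) (2 * x)
              + 2 * x ^ 2 * GammaInc (x + 2) (2 * x) := by
  have h4 : 1 ≤ x := by linarith [Real.add_one_le_exp (3:ℝ)]
  have i4 := aux_integrable (x + 4) (2 * x) (by linarith) (by linarith)
  have i3 := aux_integrable (x + 3) (2 * x) (by linarith) (by linarith)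
  have i2 := aux_integrable (x + 2) (2 * x) (by linarith) (by linarith)
  have i43 : IntegrableOn (fun t : ℝ => t ^ (x + 4 - 1) * Real.exp (-t)
      - 3 * x * (t ^ (x + 3 - 1) * Real.exp (-t))) (Set.Ioi (2 * x)) :=
    i4.sub (i3.const_mul (3 * x))
  have i := i43.add (i2.const_mul (2 * x ^ 2))
  unfold GammaInc
  rw [← integral_const_mul, ← integral_const_mul, ← integral_sub i4 (i3.const_mul (3 * x)),
    ← integral_add i43 (i2.const_mul (2 * x ^ 2))]
  have e : Real.exp (x - 1) = Real.exp (3 * x) * Real.exp (-(2 * x + 1)) := by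
    rw [← Real.exp_add]; congr 1; ring
  have key : ∀ t, 2 * x < t → t ^ (x + 4 - 1) * Real.exp (-t)
      - 3 * x * (t ^ (x + 3 - 1) * Real.exp (-t))
      + 2 * x ^ 2 * (t ^ (x + 2 - 1) * Real.exp (-t))
        = t ^ x * (t * ((t - x) * (t - 2 * x))) * Real.exp (-t) := by
    intro t ht
    have t0 : t ≠ 0 := by linarith
    have a1 : t ^ (x + 2 - 1) = t ^ x * t := by
      rw [← Real.rpow_add_one t0]; congr 1; ring
    have a2 : t ^ (x + 3 - 1) = t ^ x * t * t := by
      rw [← Real.rpow_add_one t0, ← Real.rpow_add_one t0]; congr 1; ring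
    have a3 : t ^ (x + 4 - 1) = t ^ x * t * t * t := by
      rw [← Real.rpow_add_one t0, ← Real.rpow_add_one t0, ← Real.rpow_add_one t0]
      congr 1; ring
    rw [a1, a2, a3]; ring
  rw [e]
  refine aux_lower _ _ _ i (fun t ht => ?_) (fun t ht => ?_)
  · refine le_of_le_of_eq ?_ (key t ht).symm
    have := aux_pow x t hx ht
    have := Real.exp_pos (3 * x)
    exact mul_nonneg (mul_nonneg (by linarith) (mul_nonneg (by linarith)
      (mul_nonneg (by linarith) (by linarith)))) (Real.exp_pos _).le
  · refine le_of_le_of_eq ?_ (key t (by linarith)).symm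
    have h := aux_pow x t hx (by linarith)
    have := Real.exp_pos (3 * x)
    refine mul_le_mul_of_nonneg_right ?_ (Real.exp_pos _).le
    have b1 : 1 ≤ (t - x) * (t - 2 * x) :=
      one_le_mul_of_one_le_of_one_le (by linarith) (by linarith)
    have b2 : 1 ≤ t * ((t - x) * (t - 2 * x)) :=
      one_le_mul_of_one_le_of_one_le (by linarith) b1
    nlinarith

/-- The function `f(x) = x(x+1)/(Γ(x+2,2x) - x Γ(x+1,2x))
  - 4x³(x+3)/((x+2)(Γ(x+4,2x) - 3x Γ(x+3,2x) + 2x² Γ(x+2,2x)))` tends to `0` as `x → ∞`. -/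
theorem balanced_fun_tendsto_zero :
    Tendsto (fun x : ℝ =>
        x * (x + 1) / (GammaInc (x + 2) (2 * x) - x * GammaInc (x + 1) (2 * x))
          - 4 * x ^ 3 * (x + 3) /
            ((x + 2) * (GammaInc (x + 4) (2 * x) - 3 * x * GammaInc (x + 3) (2 * x)
              + 2 * x ^ 2 * GammaInc (x + 2) (2 * x))))
      atTop (nhds 0) := by
  have lim : Tendsto (fun x : ℝ => 16 * Real.exp 1 * (x ^ 4 * Real.exp (-x))) atTop (nhds 0) := by
    simpa using (Real.tendsto_pow_mul_exp_neg_atTop_nhds_zero 4).const_mul (16 * Real.exp 1)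
  have b : ∀ x : ℝ, 16 * Real.exp 1 * (x ^ 4 * Real.exp (-x)) = 16 * x ^ 4 / Real.exp (x - 1) := by
    intro x
    rw [div_eq_mul_inv, ← Real.exp_neg, neg_sub, sub_eq_add_neg, Real.exp_add]; ring
  rw [show (0:ℝ) = 0 - 0 by ring]
  refine Tendsto.sub ?_ ?_
  · refine squeeze_zero' ?_ ?_ lim
    · filter_upwards [eventually_ge_atTop (Real.exp 3)] with x hx
      have h4 : 1 ≤ x := by linarith [Real.add_one_le_exp (3:ℝ)]
      exact div_nonneg (by positivity) ((Real.exp_pos _).le.trans (aux_D1 x hx))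
    · filter_upwards [eventually_ge_atTop (Real.exp 3)] with x hx
      have h4 : 1 ≤ x := by linarith [Real.add_one_le_exp (3:ℝ)]
      rw [b]
      refine div_le_div₀ (by positivity) ?_ (Real.exp_pos _) (aux_D1 x hx)
      have : x ^ 2 ≤ x ^ 4 := pow_le_pow_right₀ h4 (by norm_num)
      nlinarith
  · refine squeeze_zero' ?_ ?_ lim
    · filter_upwards [eventually_ge_atTop (Real.exp 3)] with x hx
      have h4 : 1 ≤ x := by linarith [Real.add_one_le_exp (3:ℝ)]
      exact div_nonneg (by positivity)
        (mul_nonneg (by linarith) ((Real.exp_pos _).le.trans (aux_D2 x hx)))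
    · filter_upwards [eventually_ge_atTop (Real.exp 3)] with x hx
      have h4 : 1 ≤ x := by linarith [Real.add_one_le_exp (3:ℝ)]
      rw [b]
      have h := aux_D2 x hx
      have p := Real.exp_pos (x - 1)
      refine div_le_div₀ (by positivity) ?_ p ?_
      · have : 0 < x ^ 3 := by positivity
        have e : x ^ 4 = x ^ 3 * x := by ring
        rw [e]; nlinarith
      · nlinarith
end
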